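/- arXiv:2204.09136 — 2 statements merged into one kernel-verified Lean document; each statement's English description precedes it below -/
import Mathlib

section
/- Any deterministic streaming algorithm (modeled as an oblivious leveled read-once branching program with access to the current time index) that outputs a (1+ε)-multiplicative approximation to the number of ones in a length-n stream of bits, for a fixed constant ε > 0, must have at least Ω(n^{1/3}) states at some level, and hence uses Ω(log n) bits of memory. -/
/-- The state reached by a leveled (time-aware) width-`w` read-once branching
program after reading the first `t` bits of the stream `b`. -/
def runChain {M : Type} (next : ℕ → M → Bool → M) (start : M) (b : ℕ → Bool) : ℕ → M
  | 0 => start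
  | t + 1 => next t (runChain next start b t) (b t)

/-!
Let `E_t(k)` be the largest count of ones that shares its state at time `t` with some count at most
`k`. Appending a zero gives `E_t(k) ≤ E_{t+1}(k)`, and appending a one gives
`E_t(k) + 1 ≤ E_{t+1}(k + 1)`. With `w` states, `E_t` cannot be strictly increasing on `{0, …, w}`,
because distinct values of `E_t` are attained at distinct states; so at every step some `E_t(k)`
with `k ≤ w` grows, and `n ≤ ∑_{k ≤ w} E_n(k)`. A `(1 + ε)`-approximation at time `n` forces
`E_n(k) ≤ (1 + ε)² k`, hence `n ≤ (1 + ε)² w²`. It also separates the all-zeros from the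
all-ones input, so `1 ≤ s`, which absorbs the additive constant of the logarithmic bound.
-/

section StateCounts

variable {M : Type} (next : ℕ → M → Bool → M) (start : M)

/-- The set `C_u` of counts of ones over the inputs of length `t` that lead to the state `u`. The
inputs are infinite streams, of which only the first `t` bits matter. -/
def stateCounts (t : ℕ) (u : M) : Set ℕ :=
  {m | ∃ b : ℕ → Bool, runChain next start b t = u ∧ Nat.count (b · = true) t = m}

/-- The counts of ones at time `t` that share their state with some count at most `k`. -/
def linkedCounts (t k : ℕ) : Set ℕ :=
  {m | ∃ u, m ∈ stateCounts next start t u ∧ ∃ j ∈ stateCounts next start t u, j ≤ k}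

/-- The largest right endpoint among the intervals `[min C_u, max C_u]` at time `t` whose left
endpoint is at most `k`; summed over `k`, it is the potential of the pigeonhole argument. -/
noncomputable def maxEnd (t k : ℕ) : ℕ :=
  sSup (linkedCounts next start t k)

/-- Any two counts that share a state at time `t` agree up to the factor `α`: `max C_u ≤ α k` for
every `k ∈ C_u`. This is what the correctness of an approximate counter amounts to. -/
def CountsWithinRatio (t : ℕ) (α : ℝ) : Prop :=
  ∀ u, ∀ j ∈ stateCounts next start t u, ∀ m ∈ stateCounts next start t u, (m : ℝ) ≤ α * j

lemma runChain_congr {b b' : ℕ → Bool} {t : ℕ} (h : ∀ i < t, b i = b' i) :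
    runChain next start b t = runChain next start b' t := by
  induction t with
  | zero => rfl
  | succ t ih => rw [runChain, runChain, ih fun i hi => h i (by lia), h t t.lt_succ_self]

variable {next start}

lemma count_mem_stateCounts (b : ℕ → Bool) (t : ℕ) :
    Nat.count (b · = true) t ∈ stateCounts next start t (runChain next start b t) :=
  ⟨b, rfl, rfl⟩

lemma le_of_mem_stateCounts {t m : ℕ} {u : M} (hm : m ∈ stateCounts next start t u) : m ≤ t := by
  obtain ⟨b, -, rfl⟩ := hm
  exact Nat.count_le _

lemma add_toNat_mem_stateCounts {t m : ℕ} {u : M} (hm : m ∈ stateCounts next start t u)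
    (x : Bool) : m + x.toNat ∈ stateCounts next start (t + 1) (next t u x) := by
  obtain ⟨b, rfl, rfl⟩ := hm
  have agree : ∀ i < t, Function.update b t x i = b i := fun i hi =>
    Function.update_of_ne hi.ne _ _
  refine ⟨Function.update b t x, ?_, ?_⟩
  · rw [runChain, runChain_congr next start agree, Function.update_self]
  · have count_eq : Nat.count (Function.update b t x · = true) t = Nat.count (b · = true) t := by
      simp only [Nat.count_eq_card_filter_range]
      congr 1
      exact Finset.filter_congr fun i hi => by rw [agree i (Finset.mem_range.mp hi)]
    cases x <;> simp [Nat.count_succ, count_eq]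

variable (next start)

lemma linkedCounts_nonempty (t k : ℕ) : (linkedCounts next start t k).Nonempty := by
  have zero_mem : 0 ∈ stateCounts next start t (runChain next start (fun _ => false) t) := by
    simpa using count_mem_stateCounts (next := next) (start := start) (fun _ => false) t
  exact ⟨0, _, zero_mem, 0, zero_mem, k.zero_le⟩

lemma bddAbove_linkedCounts (t k : ℕ) : BddAbove (linkedCounts next start t k) :=
  ⟨t, fun _ ⟨_, hm, _⟩ => le_of_mem_stateCounts hm⟩

lemma maxEnd_mem_linkedCounts (t k : ℕ) : maxEnd next start t k ∈ linkedCounts next start t k :=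
  Nat.sSup_mem (linkedCounts_nonempty next start t k) (bddAbove_linkedCounts next start t k)

variable {next start} in
lemma le_maxEnd {t j k m : ℕ} {u : M} (hm : m ∈ stateCounts next start t u)
    (hj : j ∈ stateCounts next start t u) (hjk : j ≤ k) : m ≤ maxEnd next start t k :=
  le_csSup (bddAbove_linkedCounts next start t k) ⟨u, hm, j, hj, hjk⟩

lemma maxEnd_add_toNat_le (t k : ℕ) (x : Bool) :
    maxEnd next start t k + x.toNat ≤ maxEnd next start (t + 1) (k + x.toNat) := by
  obtain ⟨u, hm, j, hj, hjk⟩ := maxEnd_mem_linkedCounts next start t k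
  exact le_maxEnd (add_toNat_mem_stateCounts hm x) (add_toNat_mem_stateCounts hj x)
    (Nat.add_le_add_right hjk _)

lemma maxEnd_le_maxEnd_succ (t k : ℕ) : maxEnd next start t k ≤ maxEnd next start (t + 1) k :=
  maxEnd_add_toNat_le next start t k false

variable [Fintype M]

lemma not_strictMonoOn_maxEnd (t : ℕ) :
    ¬ StrictMonoOn (maxEnd next start t) (Set.Iic (Fintype.card M)) := by
  intro hmono
  choose state hmax low hlow low_le using maxEnd_mem_linkedCounts next start t
  have maxEnd_le {i j : ℕ} (h : state i = state j) :
      maxEnd next start t i ≤ maxEnd next start t j :=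
    le_maxEnd (h ▸ hmax i) (hlow j) (low_le j)
  obtain ⟨i, hi, j, hj, hij, hstate⟩ :=
    Finset.exists_ne_map_eq_of_card_lt_of_maps_to (s := Finset.Iic (Fintype.card M))
      (t := Finset.univ) (f := state) (by simp) fun _ _ => Finset.mem_coe.mpr (Finset.mem_univ _)
  exact hij <| hmono.injOn (Finset.mem_Iic.mp hi) (Finset.mem_Iic.mp hj) <|
    (maxEnd_le hstate).antisymm (maxEnd_le hstate.symm)

lemma exists_maxEnd_lt_maxEnd_succ (t : ℕ) :
    ∃ k ≤ Fintype.card M, maxEnd next start t k < maxEnd next start (t + 1) k := by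
  by_contra! hstuck
  refine not_strictMonoOn_maxEnd next start t (strictMonoOn_of_lt_add_one Set.ordConnected_Iic ?_)
  intro k _ _ hk
  calc maxEnd next start t k
      < maxEnd next start (t + 1) (k + 1) := maxEnd_add_toNat_le next start t k true
    _ ≤ maxEnd next start t (k + 1) := hstuck _ hk

lemma le_sum_maxEnd (t : ℕ) :
    t ≤ ∑ k ∈ Finset.range (Fintype.card M + 1), maxEnd next start t k := by
  induction t with
  | zero => exact Nat.zero_le _
  | succ t ih =>
    obtain ⟨k, hk, hlt⟩ := exists_maxEnd_lt_maxEnd_succ next start t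
    exact ih.trans_lt <| Finset.sum_lt_sum (fun k _ => maxEnd_le_maxEnd_succ next start t k)
      ⟨k, Finset.mem_range_succ_iff.mpr hk, hlt⟩

end StateCounts

section CountRatio

variable {M : Type} {next : ℕ → M → Bool → M} {start : M} {n : ℕ}

lemma countsWithinRatio_of_approx {ε : ℝ} (hε : 0 ≤ 1 + ε) {out : M → ℝ}
    (hout : ∀ b : ℕ → Bool,
      out (runChain next start b n) ≤ (1 + ε) * (Nat.count (b · = true) n : ℝ) ∧
        (Nat.count (b · = true) n : ℝ) ≤ (1 + ε) * out (runChain next start b n)) :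
    CountsWithinRatio next start n ((1 + ε) ^ 2) := by
  rintro _ _ ⟨b, rfl, rfl⟩ _ ⟨b', hb', rfl⟩
  calc (Nat.count (b' · = true) n : ℝ)
      ≤ (1 + ε) * out (runChain next start b n) := hb' ▸ (hout b').2
    _ ≤ (1 + ε) * ((1 + ε) * (Nat.count (b · = true) n : ℝ)) := by gcongr; exact (hout b).1
    _ = (1 + ε) ^ 2 * (Nat.count (b · = true) n : ℝ) := by ring

variable [Fintype M] {α : ℝ}

lemma CountsWithinRatio.le_mul_card_sq (hratio : CountsWithinRatio next start n α) (hα : 0 ≤ α) :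
    (n : ℝ) ≤ α * (Fintype.card M : ℝ) ^ 2 := by
  have maxEnd_le (k : ℕ) : (maxEnd next start n k : ℝ) ≤ α * k := by
    obtain ⟨u, hm, j, hj, hjk⟩ := maxEnd_mem_linkedCounts next start n k
    exact (hratio u j hj _ hm).trans (by gcongr)
  have gauss : (∑ k ∈ Finset.range (Fintype.card M + 1), k) ≤ Fintype.card M ^ 2 := by
    have card_pos : 0 < Fintype.card M := Fintype.card_pos_iff.mpr ⟨start⟩
    have := Finset.sum_range_id_mul_two (Fintype.card M + 1)
    rw [Nat.add_sub_cancel] at this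
    nlinarith
  calc (n : ℝ)
      ≤ ∑ k ∈ Finset.range (Fintype.card M + 1), (maxEnd next start n k : ℝ) := mod_cast
        le_sum_maxEnd next start n
    _ ≤ ∑ k ∈ Finset.range (Fintype.card M + 1), α * (k : ℝ) :=
        Finset.sum_le_sum fun k _ => maxEnd_le k
    _ = α * ((∑ k ∈ Finset.range (Fintype.card M + 1), k : ℕ) : ℝ) := by
        rw [← Finset.mul_sum, Nat.cast_sum]
    _ ≤ α * (Fintype.card M : ℝ) ^ 2 := by gcongr; exact_mod_cast gauss

lemma CountsWithinRatio.one_lt_card (hratio : CountsWithinRatio next start n α) (hn : 1 ≤ n) :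
    1 < Fintype.card M := by
  by_contra! hcard
  have := Fintype.card_le_one_iff_subsingleton.mp hcard
  have zero_mem : 0 ∈ stateCounts next start n start := by
    simpa [Subsingleton.elim _ start] using
      count_mem_stateCounts (next := next) (start := start) (fun _ => false) n
  have n_mem : n ∈ stateCounts next start n start := by
    simpa [Subsingleton.elim _ start] using
      count_mem_stateCounts (next := next) (start := start) (fun _ => true) n
  have n_le_zero : (n : ℝ) ≤ 0 := by simpa using hratio start 0 zero_mem n n_mem
  exact absurd hn (by simpa using n_le_zero)

end CountRatio

lemma log_le_of_le_sq_of_le_two_pow {A x : ℝ} {w s : ℕ} (hA : 1 ≤ A) (hx : 0 < x)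
    (hxw : x ≤ (A * w) ^ 2) (hw : w ≤ 2 ^ s) (hs : 1 ≤ s) : Real.log x ≤ 2 * A * s := by
  have log_A_le : Real.log A ≤ (A - 1) * s :=
    calc Real.log A ≤ A - 1 := Real.log_le_sub_one_of_pos (by linarith)
      _ ≤ (A - 1) * s := le_mul_of_one_le_right (sub_nonneg.mpr hA) (mod_cast hs)
  have log_two_le_one : Real.log 2 ≤ 1 := by linarith [Real.log_two_lt_d9]
  calc Real.log x
      ≤ Real.log ((A * 2 ^ s) ^ 2) := by
        refine Real.log_le_log hx (hxw.trans ?_)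
        gcongr
        exact_mod_cast hw
    _ = 2 * (Real.log A + s * Real.log 2) := by
        rw [Real.log_pow, Real.log_mul (by positivity) (by positivity), Real.log_pow, Nat.cast_two]
    _ ≤ 2 * ((A - 1) * s + s * 1) := by gcongr
    _ = 2 * A * s := by ring

theorem stmt_7_general (ε : ℝ) (hε : 0 ≤ ε) :
    ∃ c : ℝ, 0 < c ∧
      ∀ (n : ℕ) (M : Type) [Fintype M], 1 ≤ n →
        ∀ (next : ℕ → M → Bool → M) (start : M) (out : M → ℝ),
          (∀ b : ℕ → Bool,
            out (runChain next start b n) ≤ (1 + ε) * (Nat.count (b · = true) n : ℝ) ∧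
              (Nat.count (b · = true) n : ℝ) ≤ (1 + ε) * out (runChain next start b n)) →
          c * (n : ℝ) ^ ((1 : ℝ) / 2) ≤ (Fintype.card M : ℝ) ∧
            ∀ s : ℕ, Fintype.card M ≤ 2 ^ s → c * Real.log n ≤ (s : ℝ) := by
  refine ⟨(2 * (1 + ε))⁻¹, by positivity, fun n M _ hn next start out hout => ?_⟩
  have hratio : CountsWithinRatio next start n ((1 + ε) ^ 2) :=
    countsWithinRatio_of_approx (by positivity) hout
  have n_le_sq : (n : ℝ) ≤ ((1 + ε) * Fintype.card M) ^ 2 := by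
    rw [mul_pow]
    exact hratio.le_mul_card_sq (by positivity)
  have one_lt_card := hratio.one_lt_card hn
  simp only [inv_mul_le_iff₀ (show 0 < 2 * (1 + ε) by positivity)]
  constructor
  · calc (n : ℝ) ^ ((1 : ℝ) / 2) ≤ (1 + ε) * Fintype.card M := by
          rw [← Real.sqrt_eq_rpow]
          exact Real.sqrt_le_iff.mpr ⟨by positivity, n_le_sq⟩
      _ ≤ 2 * (1 + ε) * Fintype.card M := by gcongr; linarith
  · intro s hs
    have one_le_s : 1 ≤ s := Nat.one_le_iff_ne_zero.mpr (by rintro rfl; lia)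
    exact log_le_of_le_sq_of_le_two_pow (by linarith) (mod_cast hn) n_le_sq hs one_le_s

/-- Any deterministic streaming algorithm, modeled as an oblivious
leveled read-once branching program of width `w` with access to the current time
index, that at every time `t ≤ n` outputs a `(1+ε)`-multiplicative approximation
to the number of ones seen so far, must satisfy `w = Ω(n^{1/3})`; hence its
memory `s` (with `w = 2^s`) is `Ω(log n)`. -/
theorem stmt_7 (ε : ℝ) (hε : 0 < ε) :
    ∃ c : ℝ, 0 < c ∧
      ∀ (n w : ℕ), 1 ≤ n →
        ∀ (next : ℕ → Fin w → Bool → Fin w) (start : Fin w) (out : ℕ → Fin w → ℕ),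
          (∀ (b : ℕ → Bool) (t : ℕ), t ≤ n →
            ((out t (runChain next start b t) : ℝ) ≤
              (1 + ε) * (((Finset.range t).filter fun i => b i).card : ℝ) ∧
             ((((Finset.range t).filter fun i => b i).card : ℝ) ≤
              (1 + ε) * (out t (runChain next start b t) : ℝ)))) →
          c * (n : ℝ) ^ ((1 : ℝ) / 3) ≤ (w : ℝ) ∧
            ∀ s : ℕ, w = 2 ^ s → c * Real.log n ≤ (s : ℝ) := by
  obtain ⟨c, hc, bound⟩ := stmt_7_general ε hε.le
  refine ⟨c, hc, fun n w hn next start out hout => ?_⟩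
  have bound_w := bound n (Fin w) hn next start (fun u => out n u) fun b => by
    simpa only [Nat.count_eq_card_filter_range] using hout b n le_rfl
  rw [Fintype.card_fin] at bound_w
  have cbrt_le_sqrt : (n : ℝ) ^ ((1 : ℝ) / 3) ≤ (n : ℝ) ^ ((1 : ℝ) / 2) :=
    Real.rpow_le_rpow_of_exponent_le (mod_cast hn) (by norm_num)
  exact ⟨le_trans (by gcongr) bound_w.1, fun s hs => bound_w.2 s hs.le⟩
end

section
/- Consider the n-player one-way deterministic communication game where player i holds a bit b_i ∈ {0,1}, players speak in order 1, 2, ..., n (each sending a message to the next player depending on their bit and the received message), and player n must output a (1+ε)-multiplicative approximation to Σ_i b_i (with output 0 allowed only when the sum is 0), for a fixed constant ε > 0. Then the maximum message length over all players is Ω(log n). -/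
/-!
Fix a time `t` and call two counts of ones confusable if some state can be reached with both. Let
`T t x` be the largest count confusable with a count at most `x`. Appending the same bit to both
inputs preserves confusability, so `T (t + 1) x ≥ T t x` and `T (t + 1) (x + 1) ≥ T t x + 1`. With
`w` states, two of the states witnessing `T t 0, …, T t w` coincide, so `T t (x + 1) = T t x` for
some `x < w`, and there the second inequality is a gain of one. Hence `∑ x ≤ w, T t x` grows at
every step and is at least `n` after `n` players. On the other hand an `α`-approximation forces
`T n x ≤ α ^ 2 * x`, so `n ≤ α ^ 2 * (w * (w + 1) / 2)`.
-/

/-- The message held after the first `t` players have spoken: player `t+1`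
(0-indexed `t`) sends `next t m b t`, depending on its index, its bit, and the
received message. The message space has size `2^s` (messages of length `s`). -/
def runProtocol {M : Type} (next : ℕ → M → Bool → M) (start : M) (b : ℕ → Bool) : ℕ → M
  | 0 => start
  | t + 1 => next t (runProtocol next start b t) (b t)

section

variable {M : Type} {next : ℕ → M → Bool → M} {start : M}

theorem runProtocol_congr {b b' : ℕ → Bool} {t : ℕ} (h : ∀ i < t, b i = b' i) :
    runProtocol next start b t = runProtocol next start b' t := by
  induction t with
  | zero => rfl
  | succ t ih =>
    simp only [runProtocol, ih fun i hi => h i (hi.trans t.lt_succ_self), h t t.lt_succ_self]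

/-- After `t` players, the state `m` can be reached by an input with exactly `k` ones among its
first `t` bits. -/
def Reaches (next : ℕ → M → Bool → M) (start : M) (t : ℕ) (m : M) (k : ℕ) : Prop :=
  ∃ b : ℕ → Bool, runProtocol next start b t = m ∧ Nat.count (fun i => b i) t = k

theorem Reaches.le {t k : ℕ} {m : M} (h : Reaches next start t m k) : k ≤ t := by
  obtain ⟨b, -, rfl⟩ := h
  exact Nat.count_le _

theorem Reaches.step {t k : ℕ} {m : M} (h : Reaches next start t m k) (β : Bool) :
    Reaches next start (t + 1) (next t m β) (k + β.toNat) := by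
  obtain ⟨b, rfl, rfl⟩ := h
  have update_eq : ∀ i < t, Function.update b t β i = b i :=
    fun i hi => Function.update_of_ne hi.ne β b
  have count_eq : Nat.count (fun i => Function.update b t β i) t = Nat.count (fun i => b i) t := by
    simp only [Nat.count_eq_card_filter_range]
    exact congrArg Finset.card
      (Finset.filter_congr fun i hi => by rw [update_eq i (Finset.mem_range.1 hi)])
  refine ⟨Function.update b t β, ?_, ?_⟩
  · simp only [runProtocol, runProtocol_congr update_eq, Function.update_self]
  · cases β <;> simp [Nat.count_succ, count_eq]

/-- Two counts are confusable after `t` players if a common state is reached with both. -/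
def Confusable (next : ℕ → M → Bool → M) (start : M) (t k l : ℕ) : Prop :=
  ∃ m, Reaches next start t m k ∧ Reaches next start t m l

theorem Confusable.step {t k l : ℕ} (h : Confusable next start t k l) (β : Bool) :
    Confusable next start (t + 1) (k + β.toNat) (l + β.toNat) :=
  let ⟨_, hk, hl⟩ := h
  ⟨_, hk.step β, hl.step β⟩

theorem bddAbove_confusable (t x : ℕ) : BddAbove {l | ∃ k ≤ x, Confusable next start t k l} :=
  ⟨t, fun _ ⟨_, _, _, _, hl⟩ => hl.le⟩

theorem confusable_zero_zero (t : ℕ) : Confusable next start t 0 0 :=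
  have h : Reaches next start t (runProtocol next start (fun _ => false) t) 0 :=
    ⟨fun _ => false, rfl, by simp⟩
  ⟨_, h, h⟩

/-- The largest count that is confusable, after `t` players, with some count at most `x`. -/
noncomputable def maxConfusable (next : ℕ → M → Bool → M) (start : M) (t x : ℕ) : ℕ :=
  sSup {l | ∃ k ≤ x, Confusable next start t k l}

theorem Confusable.le_maxConfusable {t x k l : ℕ} (h : Confusable next start t k l)
    (hk : k ≤ x) : l ≤ maxConfusable next start t x :=
  le_csSup (bddAbove_confusable t x) ⟨k, hk, h⟩

variable (next start)

theorem exists_confusable_maxConfusable (t x : ℕ) :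
    ∃ k ≤ x, Confusable next start t k (maxConfusable next start t x) :=
  Nat.sSup_mem (s := {l | ∃ k ≤ x, Confusable next start t k l})
    ⟨0, 0, x.zero_le, confusable_zero_zero t⟩ (bddAbove_confusable t x)

theorem maxConfusable_mono (t : ℕ) : Monotone (maxConfusable next start t) := fun x _ hxy =>
  let ⟨_, hk, h⟩ := exists_confusable_maxConfusable next start t x
  h.le_maxConfusable (hk.trans hxy)

theorem maxConfusable_le_succ (t x : ℕ) :
    maxConfusable next start t x ≤ maxConfusable next start (t + 1) x :=
  let ⟨_, hk, h⟩ := exists_confusable_maxConfusable next start t x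
  (h.step false).le_maxConfusable hk

theorem maxConfusable_add_one_le (t x : ℕ) :
    maxConfusable next start t x + 1 ≤ maxConfusable next start (t + 1) (x + 1) :=
  let ⟨_, hk, h⟩ := exists_confusable_maxConfusable next start t x
  (h.step true).le_maxConfusable (Nat.succ_le_succ hk)

theorem exists_maxConfusable_succ_le [Fintype M] (t : ℕ) :
    ∃ x < Fintype.card M,
      maxConfusable next start t (x + 1) ≤ maxConfusable next start t x := by
  choose k hk m hm hmax using exists_confusable_maxConfusable next start t
  obtain ⟨x, y, hxy, hstate⟩ : ∃ x y : Fin (Fintype.card M + 1), x < y ∧ m x = m y := by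
    obtain ⟨x, y, hne, hstate⟩ := Fintype.exists_ne_map_eq_of_card_lt
      (fun x : Fin (Fintype.card M + 1) => m x) (by simp)
    rcases hne.lt_or_gt with h | h
    exacts [⟨x, y, h, hstate⟩, ⟨y, x, h, hstate.symm⟩]
  have confusable : Confusable next start t (k x) (maxConfusable next start t y) :=
    ⟨m x, hm x, hstate ▸ hmax y⟩
  exact ⟨x, by omega, (maxConfusable_mono next start t (Nat.succ_le_of_lt hxy)).trans
    (confusable.le_maxConfusable (hk x))⟩

theorem le_sum_maxConfusable [Fintype M] (t : ℕ) :
    t ≤ ∑ x ∈ Finset.range (Fintype.card M + 1), maxConfusable next start t x := by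
  induction t with
  | zero => exact Nat.zero_le _
  | succ t ih =>
    obtain ⟨x, hx, hflat⟩ := exists_maxConfusable_succ_le next start t
    refine Nat.succ_le_of_lt (ih.trans_lt (Finset.sum_lt_sum
      (fun y _ => maxConfusable_le_succ next start t y) ⟨x + 1, by simpa using hx, ?_⟩))
    exact hflat.trans_lt (maxConfusable_add_one_le next start t x)

variable {next start}

/-- The protocol followed by `out` computes the number of ones among the first `n` bits up to a
multiplicative factor `α` in both directions. The second inequality makes a zero output possible
only when there are no ones. -/
def IsApproxCounter (next : ℕ → M → Bool → M) (start : M) (out : M → ℝ) (α : ℝ) (n : ℕ) : Prop :=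
  ∀ b : ℕ → Bool,
    out (runProtocol next start b n) ≤ α * Nat.count (fun i => b i) n ∧
      (Nat.count (fun i => b i) n : ℝ) ≤ α * out (runProtocol next start b n)

namespace IsApproxCounter

variable {out : M → ℝ} {α : ℝ} {n : ℕ}

theorem le_of_confusable (h : IsApproxCounter next start out α n) (hα : 0 ≤ α) {k l : ℕ}
    (hkl : Confusable next start n k l) : (l : ℝ) ≤ α ^ 2 * k := by
  obtain ⟨_, ⟨b, rfl, rfl⟩, ⟨b', hstate, rfl⟩⟩ := hkl
  calc (Nat.count (fun i => b' i) n : ℝ)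
      ≤ α * out (runProtocol next start b n) := hstate ▸ (h b').2
    _ ≤ α * (α * Nat.count (fun i => b i) n) := by gcongr; exact (h b).1
    _ = α ^ 2 * Nat.count (fun i => b i) n := by ring

theorem maxConfusable_le (h : IsApproxCounter next start out α n) (hα : 0 ≤ α) (x : ℕ) :
    (maxConfusable next start n x : ℝ) ≤ α ^ 2 * x := by
  obtain ⟨k, hk, hconf⟩ := exists_confusable_maxConfusable next start n x
  exact (h.le_of_confusable hα hconf).trans (by gcongr)

theorem le_mul_choose [Fintype M] (h : IsApproxCounter next start out α n) (hα : 0 ≤ α) :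
    (n : ℝ) ≤ α ^ 2 * (Fintype.card M + 1).choose 2 := by
  calc (n : ℝ) ≤ ∑ x ∈ Finset.range (Fintype.card M + 1), (maxConfusable next start n x : ℝ) :=
        mod_cast le_sum_maxConfusable next start n
    _ ≤ ∑ x ∈ Finset.range (Fintype.card M + 1), α ^ 2 * (x : ℝ) :=
        Finset.sum_le_sum fun x _ => h.maxConfusable_le hα x
    _ = α ^ 2 * (Fintype.card M + 1).choose 2 := by
        rw [← Finset.mul_sum, ← Nat.cast_sum, Finset.sum_range_id, Nat.choose_two_right]

theorem le_mul_card_sq [Fintype M] (h : IsApproxCounter next start out α n) (hα : 0 ≤ α) :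
    (n : ℝ) ≤ α ^ 2 * (Fintype.card M : ℝ) ^ 2 := by
  have choose_le : (Fintype.card M + 1).choose 2 ≤ Fintype.card M ^ 2 := by
    rw [Nat.choose_two_right, Nat.add_sub_cancel]
    exact Nat.div_le_of_le_mul (by nlinarith [Nat.le_self_pow two_ne_zero (Fintype.card M)])
  refine (h.le_mul_choose hα).trans ?_
  gcongr
  exact_mod_cast choose_le

theorem nontrivial (h : IsApproxCounter next start out α n) (hα : 0 ≤ α) (hn : 1 ≤ n) :
    Nontrivial M := by
  by_contra hM
  have := not_nontrivial_iff_subsingleton.1 hM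
  have confusable : Confusable next start n 0 n :=
    ⟨start, ⟨fun _ => false, Subsingleton.elim _ _, by simp⟩,
      ⟨fun _ => true, Subsingleton.elim _ _, by simp⟩⟩
  have n_le_zero : (n : ℝ) ≤ 0 := by simpa using h.le_of_confusable hα confusable
  exact absurd (mod_cast n_le_zero : n ≤ 0) (by omega)

end IsApproxCounter

theorem stmt_15_general [Fintype M] {out : M → ℝ} {α : ℝ} {n : ℕ} (hα : 1 ≤ α) (hn : 1 ≤ n)
    (h : IsApproxCounter next start out α n) :
    Real.log n ≤ 2 * Real.log (2 * α) * Real.logb 2 (Fintype.card M) := by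
  have α_pos : 0 < α := one_pos.trans_le hα
  have := h.nontrivial α_pos.le hn
  have card_pos : (0 : ℝ) < Fintype.card M := mod_cast Fintype.card_pos
  have one_le_logb : 1 ≤ Real.logb 2 (Fintype.card M) := by
    rw [Real.le_logb_iff_rpow_le one_lt_two card_pos, Real.rpow_one]
    exact_mod_cast Fintype.one_lt_card (α := M)
  calc Real.log n ≤ Real.log (α ^ 2 * (Fintype.card M : ℝ) ^ 2) :=
        Real.log_le_log (mod_cast hn) (h.le_mul_card_sq α_pos.le)
    _ = 2 * Real.log α + 2 * Real.log (Fintype.card M) := by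
        rw [Real.log_mul (by positivity) (by positivity), Real.log_pow, Real.log_pow, Nat.cast_two]
    _ = 2 * Real.log α + 2 * (Real.log 2 * Real.logb 2 (Fintype.card M)) := by
        rw [Real.logb, mul_div_cancel₀ _ (Real.log_pos one_lt_two).ne']
    _ ≤ 2 * (Real.log α * Real.logb 2 (Fintype.card M)) +
          2 * (Real.log 2 * Real.logb 2 (Fintype.card M)) := by
        gcongr
        exact le_mul_of_one_le_right (Real.log_nonneg hα) one_le_logb
    _ = 2 * Real.log (2 * α) * Real.logb 2 (Fintype.card M) := by
        rw [Real.log_mul two_ne_zero α_pos.ne']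
        ring

end

/-- In the `n`-player one-way deterministic communication game
where player `i` holds a bit `b_i`, players speak in order, and the last player
must output a `(1+ε)`-multiplicative approximation to `Σ_i b_i` (outputting `0`
only when the sum is `0`), the maximum message length `s` is `Ω(log n)`. -/
theorem stmt_15 (ε : ℝ) (hε : 0 < ε) :
    ∃ c : ℝ, 0 < c ∧
      ∀ (n s : ℕ), 1 ≤ n →
        ∀ (next : ℕ → Fin (2 ^ s) → Bool → Fin (2 ^ s)) (start : Fin (2 ^ s))
          (out : Fin (2 ^ s) → ℕ),
          (∀ b : ℕ → Bool,
            ((out (runProtocol next start b n) : ℝ) ≤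
              (1 + ε) * (((Finset.range n).filter fun i => b i).card : ℝ)) ∧
            ((((Finset.range n).filter fun i => b i).card : ℝ) ≤
              (1 + ε) * (out (runProtocol next start b n) : ℝ)) ∧
            (out (runProtocol next start b n) = 0 →
              ((Finset.range n).filter fun i => b i).card = 0)) →
          c * Real.log n ≤ (s : ℝ) := by
  have log_pos : 0 < Real.log (2 * (1 + ε)) := Real.log_pos (by linarith)
  refine ⟨(2 * Real.log (2 * (1 + ε)))⁻¹, by positivity, fun n s hn next start out H => ?_⟩
  have counter : IsApproxCounter next start (fun m => (out m : ℝ)) (1 + ε) n := fun b => by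
    simpa only [Nat.count_eq_card_filter_range] using ⟨(H b).1, (H b).2.1⟩
  rw [inv_mul_le_iff₀ (by positivity)]
  simpa [Real.logb_pow] using stmt_15_general (by linarith) hn counter
end
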